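/- (Base change of potions.) Let R be a commutative ring, A a commutative R-algebra with an M-grading 𝒜 : M → Submodule R A making it a graded R-algebra, and R' a commutative R-algebra. Equip A ⊗_R R' with the M-grading ℬ given by ℬ_m = (𝒜_m).baseChange R' (the R'-span of the image of 𝒜_m ⊗ R'), assumed to form a graded R'-algebra structure on A ⊗_R R'. Let f = {a_i}_{i∈I} be a family of homogeneous elements of A, S the multiplicative submonoid of A generated by f, and S' the multiplicative submonoid of A ⊗_R R' generated by the elements a_i ⊗ 1. Then there is a ring isomorphism A_{(f)} ⊗_R R' ≅ (A ⊗_R R')_{(f⊗1)} between the base change of the potion of A at f and the potion of A ⊗_R R' at the family {a_i ⊗ 1}. -/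

import Mathlib

/-!
Statement 12 (Base change of potions): for a graded `R`-algebra `A`, a family `f` of
homogeneous elements of `A` and an `R`-algebra `R'`, the base change `A_{(f)} ⊗_R R'`
of the potion of `A` at `f` is isomorphic, as a ring, to the potion of the `M`-graded
`R'`-algebra `A ⊗_R R'` (graded by the base-changed submodules, i.e. the `R'`-spans
of the images of the `𝒜 m`) at the family `{aᵢ ⊗ 1}`.
-/

open TensorProduct

attribute [local instance] Algebra.TensorProduct.rightAlgebra

/-- The potion `A_{(f)}` of a graded `R`-algebra is an `R`-algebra, via the degree
zero part `𝒜 0`. -/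
noncomputable local instance {M R A : Type*} [AddCommGroup M] [DecidableEq M]
    [CommRing R] [CommRing A] [Algebra R A]
    (𝒜 : M → Submodule R A) [GradedAlgebra 𝒜] (S : Submonoid A) :
    Algebra R (HomogeneousLocalization 𝒜 S) :=
  ((HomogeneousLocalization.fromZeroRingHom 𝒜 S).comp (algebraMap R (𝒜 0))).toAlgebra

/-!
Let `g : A → B` be the base change of `A` to `R'`. Every element of the base change of the potion
can be written `t / d` with a single denominator `d ∈ S` of some degree `m` and `t ∈ R' ⊗ 𝒜 m`, and
it is sent to `τ t / g d`, where `τ : R' ⊗ 𝒜 m → B` is the linear extension of `g`. The image of `τ`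
is `ℬ m`, whence surjectivity. Since `𝒜 m` is a direct summand of `A`, the map `τ` is injective
without any flatness of `R'`: if `g s * τ t = 0` for some `s ∈ S` of degree `k`, then
`s * t = 0` already in `R' ⊗ 𝒜 (k + m)`, and `t / d = s * t / (s * d) = 0`.
-/

lemma liftBaseChange_comp_injective {R S M N P : Type*} [CommSemiring R] [CommSemiring S]
    [Algebra R S] [AddCommMonoid M] [AddCommMonoid N] [AddCommMonoid P] [Module R M] [Module R N]
    [Module R P] [Module S N] [IsScalarTower R S N] {f : M →ₗ[R] N} (hf : IsBaseChange S f)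
    {i : P →ₗ[R] M} {r : M →ₗ[R] P} (hri : r ∘ₗ i = .id) :
    Function.Injective ((f ∘ₗ i).liftBaseChange S) := by
  have hfactor : (f ∘ₗ i).liftBaseChange S = hf.equiv.toLinearMap ∘ₗ i.baseChange S := by
    ext; simp [hf.equiv_tmul]
  have hretract : Function.LeftInverse (r.baseChange S) (i.baseChange S) := fun x => by
    rw [← LinearMap.comp_apply, ← LinearMap.baseChange_comp, hri, LinearMap.baseChange_id,
      LinearMap.id_apply]
  rw [hfactor]
  exact hf.equiv.injective.comp hretract.injective

lemma exists_comp_subtype_eq_id {M R A : Type*} [DecidableEq M] [Semiring R] [AddCommMonoid A]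
    [Module R A] (𝒜 : M → Submodule R A) [DirectSum.Decomposition 𝒜] (m : M) :
    ∃ r : A →ₗ[R] 𝒜 m, r ∘ₗ (𝒜 m).subtype = .id :=
  ⟨DirectSum.component R M (fun i => 𝒜 i) m ∘ₗ (DirectSum.decomposeLinearEquiv 𝒜).toLinearMap, by
    ext; simp [DirectSum.component.lof_self]⟩

section BaseChangeLift

variable {R R' P C : Type*} [CommSemiring R] [CommSemiring R'] [CommSemiring P] [CommSemiring C]
  [Algebra R R'] [Algebra R P] [Algebra R' C]

/-- The extension of a ring homomorphism `ψ : P → C` from an `R`-algebra to an `R'`-algebra along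
`P → R' ⊗[R] P`. Compatibility with scalars is stated through `R'`, so that `C` needs no `R`-algebra
structure of its own. -/
noncomputable def baseChangeLift (ψ : P →+* C)
    (hψ : ∀ r, ψ (algebraMap R P r) = algebraMap R' C (algebraMap R R' r)) :
    R' ⊗[R] P →ₐ[R'] C :=
  letI : Algebra R C := Algebra.compHom C (algebraMap R R')
  haveI : IsScalarTower R R' C := .of_algebraMap_eq fun _ => rfl
  Algebra.TensorProduct.lift (Algebra.ofId R' C) { ψ with commutes' := hψ } fun _ _ => .all _ _

lemma baseChangeLift_tmul (ψ : P →+* C)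
    (hψ : ∀ r, ψ (algebraMap R P r) = algebraMap R' C (algebraMap R R' r)) (r : R') (p : P) :
    baseChangeLift ψ hψ (r ⊗ₜ p) = algebraMap R' C r * ψ p :=
  letI : Algebra R C := Algebra.compHom C (algebraMap R R')
  haveI : IsScalarTower R R' C := .of_algebraMap_eq fun _ => rfl
  Algebra.TensorProduct.lift_tmul ..

end BaseChangeLift

section GradedPieces

variable {M R R' A B : Type*} [CommSemiring R] [CommSemiring R'] [Semiring A] [Semiring B]
  [Algebra R R'] [Algebra R A] [Algebra R B] [Algebra R' B] [IsScalarTower R R' B]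
  {𝒜 : M → Submodule R A} {g : A →ₐ[R] B}

variable (R' 𝒜 g) in
/-- The `R'`-linear extension `R' ⊗ 𝒜 m → B` of the restriction to `𝒜 m` of an `R`-algebra
homomorphism `A → B`. -/
noncomputable def gradedPieceLift (m : M) : R' ⊗[R] 𝒜 m →ₗ[R'] B :=
  (g.toLinearMap ∘ₗ (𝒜 m).subtype).liftBaseChange R'

lemma range_gradedPieceLift (m : M) :
    LinearMap.range (gradedPieceLift R' 𝒜 g m) = Submodule.span R' (g '' 𝒜 m) := by
  rw [gradedPieceLift, LinearMap.range_liftBaseChange, LinearMap.range_comp,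
    Submodule.range_subtype]
  rfl

lemma gradedPieceLift_injective [DecidableEq M] [DirectSum.Decomposition 𝒜]
    (hg : IsBaseChange R' g.toLinearMap) (m : M) :
    Function.Injective (gradedPieceLift R' 𝒜 g m) :=
  let ⟨_, hr⟩ := exists_comp_subtype_eq_id 𝒜 m
  liftBaseChange_comp_injective hg hr

variable [Add M] [SetLike.GradedMul 𝒜]

/-- Multiplication by a homogeneous element `s` of degree `k`, as a map from the degree `m` part of
a graded algebra to its degree `n = k + m` part. -/
def gradedMulLeft {k m n : M} {s : A} (hs : s ∈ 𝒜 k) (hn : k + m = n) : 𝒜 m →ₗ[R] 𝒜 n :=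
  (LinearMap.mulLeft R s).restrict fun _ ha => hn ▸ SetLike.mul_mem_graded hs ha

@[simp]
lemma coe_gradedMulLeft {k m n : M} {s : A} (hs : s ∈ 𝒜 k) (hn : k + m = n) (a : 𝒜 m) :
    (gradedMulLeft hs hn a : A) = s * a :=
  rfl

lemma gradedPieceLift_lTensor_gradedMulLeft {k m n : M} {s : A} (hs : s ∈ 𝒜 k) (hn : k + m = n)
    (t : R' ⊗[R] 𝒜 m) :
    gradedPieceLift R' 𝒜 g n ((gradedMulLeft hs hn).lTensor R' t) =
      g s * gradedPieceLift R' 𝒜 g m t := by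
  induction t with
  | zero => simp
  | tmul r a => simp [gradedPieceLift]
  | add t u ht hu => simp only [map_add, mul_add, ht, hu]

end GradedPieces

section Fractions

variable {M R A : Type*} [AddCommMonoid M] [DecidableEq M] [CommRing R] [CommRing A] [Algebra R A]
  {𝒜 : M → Submodule R A} [GradedAlgebra 𝒜] {S : Submonoid A}

variable (𝒜 S) in
/-- The `R`-algebra structure on the potion of a graded `R`-algebra, given by the map from `R` to
the degree zero part. The resulting scalar action agrees only propositionally with
`HomogeneousLocalization.instSMul`. -/
abbrev potionAlgebra : Algebra R (HomogeneousLocalization 𝒜 S) :=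
  ((HomogeneousLocalization.fromZeroRingHom 𝒜 S).comp (algebraMap R (𝒜 0))).toAlgebra

attribute [local instance] potionAlgebra

lemma val_algebraMap_potion (r : R) :
    (algebraMap R (HomogeneousLocalization 𝒜 S) r).val = Localization.mk (algebraMap R A r) 1 :=
  rfl

/-- The `R`-linear map `a ↦ a / d` from the degree `m` part of a graded `R`-algebra to a homogeneous
localization, for a denominator `d` of degree `m`. -/
def potionFraction {m : M} {d : A} (hd : d ∈ S) (hdm : d ∈ 𝒜 m) :
    𝒜 m →ₗ[R] HomogeneousLocalization 𝒜 S where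
  toFun a := .mk ⟨m, a, ⟨d, hdm⟩, hd⟩
  map_add' a b := HomogeneousLocalization.val_injective _ <| by
    simp [Localization.add_mk_self]
  map_smul' r a := HomogeneousLocalization.val_injective _ <| by
    simp [Algebra.smul_def, val_algebraMap_potion, Localization.mk_mul]

lemma val_potionFraction {m : M} {d : A} (hd : d ∈ S) (hdm : d ∈ 𝒜 m) (a : 𝒜 m) :
    (potionFraction hd hdm a).val = Localization.mk (a : A) ⟨d, hd⟩ :=
  rfl

lemma potionFraction_comp_gradedMulLeft {k m n : M} {s d e : A} (hs : s ∈ 𝒜 k)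
    (hd : d ∈ S) (hdm : d ∈ 𝒜 m) (he : e ∈ S) (hen : e ∈ 𝒜 n) (hn : k + m = n) (hsd : s * d = e) :
    potionFraction he hen ∘ₗ gradedMulLeft hs hn = potionFraction hd hdm := by
  subst hsd
  ext a
  simp only [LinearMap.comp_apply, val_potionFraction, coe_gradedMulLeft,
    Localization.mk_eq_mk_iff]
  exact Localization.r_of_eq (by ring)

lemma exists_lTensor_potionFraction_eq {N : Type*} [AddCommMonoid N] [Module R N]
    (x : N ⊗[R] HomogeneousLocalization 𝒜 S) :
    ∃ (m : M) (d : A) (hd : d ∈ S) (hdm : d ∈ 𝒜 m) (t : N ⊗[R] 𝒜 m),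
      (potionFraction hd hdm).lTensor N t = x := by
  induction x with
  | zero => exact ⟨0, 1, S.one_mem, SetLike.one_mem_graded 𝒜, 0, map_zero _⟩
  | tmul n y =>
    obtain ⟨⟨m, a, d, hd⟩, rfl⟩ := HomogeneousLocalization.mk_surjective y
    exact ⟨m, d, hd, d.2, n ⊗ₜ a, rfl⟩
  | add x y hx hy =>
    obtain ⟨m, d, hd, hdm, t, rfl⟩ := hx
    obtain ⟨k, e, he, hek, u, rfl⟩ := hy
    have hed : e * d ∈ S := S.mul_mem he hd
    have hedkm : e * d ∈ 𝒜 (k + m) := SetLike.mul_mem_graded hek hdm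
    refine ⟨k + m, e * d, hed, hedkm, (gradedMulLeft hek rfl).lTensor N t +
      (gradedMulLeft hdm (add_comm m k)).lTensor N u, ?_⟩
    rw [map_add, ← LinearMap.lTensor_comp_apply, ← LinearMap.lTensor_comp_apply,
      potionFraction_comp_gradedMulLeft hek hd hdm hed hedkm rfl rfl,
      potionFraction_comp_gradedMulLeft hdm he hek hed hedkm _ (mul_comm d e)]

end Fractions

section BaseChange

variable {M R R' A B : Type*} [AddCommMonoid M] [DecidableEq M] [CommRing R] [CommRing R']
  [CommRing A] [CommRing B] [Algebra R R'] [Algebra R A] [Algebra R B] [Algebra R' B]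
  [IsScalarTower R R' B] {𝒜 : M → Submodule R A} [GradedAlgebra 𝒜]
  {ℬ : M → Submodule R' B} [GradedAlgebra ℬ] {g : A →ₐ[R] B} {S : Submonoid A}

attribute [local instance] potionAlgebra

/-- The homomorphism `r' ⊗ (a / d) ↦ r' • (g a / g d)` from the base change of the potion of `𝒜` at
`S` to the potion of `ℬ` at `g(S)`, for a degree-preserving homomorphism `g`. -/
noncomputable def potionBaseChangeHom (hgr : ∀ m, Set.MapsTo g (𝒜 m) (ℬ m)) :
    R' ⊗[R] HomogeneousLocalization 𝒜 S →ₐ[R'] HomogeneousLocalization ℬ (S.map g) :=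
  baseChangeLift (HomogeneousLocalization.map
    (⟨g, fun ha => hgr _ ha⟩ : 𝒜 →+*ᵍ ℬ) S.le_comap_map) fun r =>
      HomogeneousLocalization.val_injective _ <| by
        change Localization.mk (g (algebraMap R A r)) (⟨g 1, _⟩ : S.map g) =
          Localization.mk (algebraMap R' B (algebraMap R R' r)) 1
        simp only [AlgHom.commutes, map_one, ← IsScalarTower.algebraMap_apply]
        rfl

lemma val_potionBaseChangeHom_lTensor_potionFraction (hgr : ∀ m, Set.MapsTo g (𝒜 m) (ℬ m))
    {m : M} {d : A} (hd : d ∈ S) (hdm : d ∈ 𝒜 m) (t : R' ⊗[R] 𝒜 m) :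
    (potionBaseChangeHom (S := S) hgr ((potionFraction hd hdm).lTensor R' t)).val =
      Localization.mk (gradedPieceLift R' 𝒜 g m t) ⟨g d, Submonoid.mem_map_of_mem g hd⟩ := by
  induction t with
  | zero => simp [Localization.mk_zero]
  | tmul r a =>
    rw [LinearMap.lTensor_tmul, potionBaseChangeHom, baseChangeLift_tmul,
      HomogeneousLocalization.val_mul, val_algebraMap_potion]
    change _ * Localization.mk (g a) ⟨g d, _⟩ = _
    simp [Localization.mk_mul, gradedPieceLift, Algebra.smul_def]
  | add t u ht hu =>
    simp only [map_add, HomogeneousLocalization.val_add, ht, hu, Localization.add_mk_self]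

lemma potionBaseChangeHom_injective (hgr : ∀ m, Set.MapsTo g (𝒜 m) (ℬ m))
    (hg : IsBaseChange R' g.toLinearMap) (hS : S ≤ SetLike.homogeneousSubmonoid 𝒜) :
    Function.Injective (potionBaseChangeHom (S := S) hgr) := by
  rw [injective_iff_map_eq_zero]
  intro x hx
  obtain ⟨m, d, hd, hdm, t, rfl⟩ := exists_lTensor_potionFraction_eq x
  obtain ⟨s, hs, hst⟩ : ∃ s ∈ S, g s * gradedPieceLift R' 𝒜 g m t = 0 := by
    have hval := val_potionBaseChangeHom_lTensor_potionFraction hgr hd hdm t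
    rw [hx, HomogeneousLocalization.val_zero, eq_comm, Localization.mk_eq_mk',
      IsLocalization.mk'_eq_zero_iff] at hval
    obtain ⟨⟨_, s, hs, rfl⟩, hst⟩ := hval
    exact ⟨s, hs, hst⟩
  obtain ⟨k, hsk⟩ := hS hs
  have hzero : (gradedMulLeft hsk rfl).lTensor R' t = 0 := by
    apply gradedPieceLift_injective hg (k + m)
    rw [gradedPieceLift_lTensor_gradedMulLeft, hst, map_zero]
  rw [← potionFraction_comp_gradedMulLeft hsk hd hdm (S.mul_mem hs hd)
    (SetLike.mul_mem_graded hsk hdm) rfl rfl, LinearMap.lTensor_comp_apply, hzero, map_zero]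

lemma potionBaseChangeHom_surjective (hgr : ∀ m, Set.MapsTo g (𝒜 m) (ℬ m))
    (hℬ : ∀ m, ℬ m ≤ Submodule.span R' (g '' 𝒜 m)) (hS : S ≤ SetLike.homogeneousSubmonoid 𝒜) :
    Function.Surjective (potionBaseChangeHom (S := S) hgr) := by
  intro y
  obtain ⟨⟨n, b, ⟨e, hen⟩, he⟩, rfl⟩ := HomogeneousLocalization.mk_surjective y
  obtain ⟨d, hd, rfl⟩ := Submonoid.mem_map.mp he
  by_cases hd0 : g d = 0
  · -- A zero denominator does not determine the degree `n`.
    have := HomogeneousLocalization.subsingleton ℬ (show 0 ∈ S.map g from hd0 ▸ he)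
    exact ⟨0, Subsingleton.elim _ _⟩
  obtain ⟨m, hdm⟩ := hS hd
  obtain rfl : m = n := DirectSum.degree_eq_of_mem_mem ℬ (hgr m hdm) hen hd0
  obtain ⟨t, ht⟩ : (b : B) ∈ LinearMap.range (gradedPieceLift R' 𝒜 g m) := by
    rw [range_gradedPieceLift]
    exact hℬ m b.2
  refine ⟨(potionFraction hd hdm).lTensor R' t, HomogeneousLocalization.val_injective _ ?_⟩
  rw [val_potionBaseChangeHom_lTensor_potionFraction, ht]
  rfl

/-- The potion of a base change of a graded algebra, graded by the spans of the images of the graded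
pieces, is the base change of the potion. -/
noncomputable def potionBaseChangeEquiv (hg : IsBaseChange R' g.toLinearMap)
    (hℬ : ∀ m, ℬ m = Submodule.span R' (g '' 𝒜 m)) (hS : S ≤ SetLike.homogeneousSubmonoid 𝒜) :
    R' ⊗[R] HomogeneousLocalization 𝒜 S ≃ₐ[R'] HomogeneousLocalization ℬ (S.map g) :=
  have hgr m : Set.MapsTo g (𝒜 m) (ℬ m) := fun _ ha =>
    hℬ m ▸ Submodule.subset_span (Set.mem_image_of_mem g ha)
  .ofBijective (potionBaseChangeHom hgr) ⟨potionBaseChangeHom_injective hgr hg hS,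
    potionBaseChangeHom_surjective hgr (fun m => (hℬ m).le) hS⟩

end BaseChange

attribute [local instance] potionAlgebra in
theorem potion_baseChange_general {M R A R' I : Type*} [AddCommMonoid M] [DecidableEq M]
    [CommRing R] [CommRing A] [Algebra R A] [CommRing R'] [Algebra R R']
    (𝒜 : M → Submodule R A) [GradedAlgebra 𝒜]
    (ℬ : M → Submodule R' (A ⊗[R] R')) [GradedAlgebra ℬ]
    (hℬ : ∀ m, ℬ m = Submodule.span R'
      ((Algebra.TensorProduct.includeLeft : A →ₐ[R] A ⊗[R] R') '' (𝒜 m)))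
    (f : I → A) (hf : ∀ i, SetLike.IsHomogeneousElem 𝒜 (f i)) :
    Nonempty
      ((HomogeneousLocalization 𝒜 (Submonoid.closure (Set.range f)) ⊗[R] R') ≃ₐ[R']
        HomogeneousLocalization ℬ
          (Submonoid.closure (Set.range fun i => (f i ⊗ₜ[R] (1 : R') : A ⊗[R] R')))) := by
  set g : A →ₐ[R] A ⊗[R] R' := Algebra.TensorProduct.includeLeft
  set S : Submonoid A := Submonoid.closure (Set.range f)
  have hmap : Submonoid.closure (Set.range fun i => f i ⊗ₜ[R] (1 : R')) = S.map g := by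
    rw [MonoidHom.map_mclosure, ← Set.range_comp]
    rfl
  have hS : S ≤ SetLike.homogeneousSubmonoid 𝒜 :=
    Submonoid.closure_le.mpr (Set.range_subset_iff.mpr hf)
  have hg : IsBaseChange R' g.toLinearMap :=
    (TensorProduct.isPushout' : Algebra.IsPushout R R' A (A ⊗[R] R')).out
  rw [hmap]
  exact ⟨(Algebra.TensorProduct.commRight R R' _).symm.trans (potionBaseChangeEquiv hg hℬ hS)⟩

theorem potion_baseChange
    {M R A R' I : Type*} [AddCommGroup M] [DecidableEq M]
    [CommRing R] [CommRing A] [Algebra R A] [CommRing R'] [Algebra R R']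
    (𝒜 : M → Submodule R A) [GradedAlgebra 𝒜]
    (ℬ : M → Submodule R' (A ⊗[R] R')) [GradedAlgebra ℬ]
    (hℬ : ∀ m, ℬ m = Submodule.span R'
      ((Algebra.TensorProduct.includeLeft : A →ₐ[R] A ⊗[R] R') '' (𝒜 m)))
    (f : I → A)
    (hf : ∀ i, f i ≠ 0 ∧ ∃ m, f i ∈ 𝒜 m) :
    Nonempty
      ((HomogeneousLocalization 𝒜 (Submonoid.closure (Set.range f)) ⊗[R] R') ≃+*
        HomogeneousLocalization ℬ
          (Submonoid.closure (Set.range fun i => (f i ⊗ₜ[R] (1 : R') : A ⊗[R] R')))) :=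
  (potion_baseChange_general 𝒜 ℬ hℬ f fun i => (hf i).2).map (·.toRingEquiv)
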